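/- Let M be a λ-term. If there exist a ∈ T_r(M) and n ∈ ℕ such that L_r^n(a) is a positive →_r-normal form, then L^n(M) is a β-normal form. -/

import Mathlib

/-! Ordinary λ-terms, in de Bruijn notation. -/
inductive Lam : Type
  | var : ℕ → Lam
  | lam : Lam → Lam
  | app : Lam → Lam → Lam
  deriving DecidableEq

namespace Lam

/-- Shift the free indices `≥ d` up by one. -/
def lift (d : ℕ) : Lam → Lam
  | var n => if n < d then var n else var (n + 1)
  | lam M => lam (lift (d + 1) M)
  | app P Q => app (lift d P) (lift d Q)

/-- Capture-avoiding substitution of `N` for the free variable `k`. -/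
def subst : Lam → ℕ → Lam → Lam
  | var n, k, N => if n = k then N else if k < n then var (n - 1) else var n
  | lam M, k, N => lam (subst M (k + 1) (lift 0 N))
  | app P Q, k, N => app (subst P k N) (subst Q k N)

/-- Number of free occurrences of the variable `k`. -/
def count (k : ℕ) : Lam → ℕ
  | var n => if n = k then 1 else 0
  | lam M => count (k + 1) M
  | app P Q => count k P + count k Q

/-- One-step β-reduction. -/
inductive Beta : Lam → Lam → Prop
  | beta (M N : Lam) : Beta (app (lam M) N) (subst M 0 N)
  | lam {M M'} : Beta M M' → Beta (lam M) (lam M')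
  | appL {P P' Q} : Beta P P' → Beta (app P Q) (app P' Q)
  | appR {P Q Q'} : Beta Q Q' → Beta (app P Q) (app P Q')

/-- The head of the application spine is a variable, with no λ on the spine. -/
def neutral : Lam → Bool
  | var _ => true
  | lam _ => false
  | app P _ => neutral P

/-- Head-normal forms: `λx₁…λxₘ. x N₁ … Nₙ`. -/
def isHNF : Lam → Prop
  | var _ => True
  | lam M => isHNF M
  | app P _ => neutral P = true

/-- The head-reduction function `H`: contracts the head redex, identity on head-normal
forms. -/
def H : Lam → Lam
  | var n => var n
  | lam M => lam (H M)
  | app (lam P) Q => subst P 0 Q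
  | app (var n) Q => app (var n) Q
  | app (app P₁ P₂) Q => app (H (app P₁ P₂)) Q

/-- The left-parallel reduction function `L`: identity on β-normal forms, propagated to
the arguments on head-normal forms, contraction of the head redex otherwise. -/
def L : Lam → Lam
  | var n => var n
  | lam M => lam (L M)
  | app (lam P) Q => subst P 0 Q
  | app (var n) Q => app (var n) (L Q)
  | app (app P₁ P₂) Q =>
      if neutral (app P₁ P₂) then app (L (app P₁ P₂)) (L Q)
      else app (L (app P₁ P₂)) Q

/-- Iterated application `M N₁ … Nₙ`. -/
def mkApps (M : Lam) (Ns : List Lam) : Lam := Ns.foldl app M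

/-- All free variables are `< d`. -/
def ClosedAt (d : ℕ) : Lam → Prop
  | var n => n < d
  | lam M => ClosedAt (d + 1) M
  | app P Q => ClosedAt d P ∧ ClosedAt d Q

/-- `M` is head-normalizable: it β-reduces in finitely many steps to a head-normal form. -/
def HeadNormalizable (M : Lam) : Prop :=
  ∃ N, Relation.ReflTransGen Beta M N ∧ isHNF N

/-- `M` is a β-normal form: it contains no β-redex, i.e. admits no β-step. -/
def BetaNF (M : Lam) : Prop := ¬∃ N, Beta M N

/-- `M` is β-normalizable: it β-reduces in finitely many steps to a β-normal form. -/
def BetaNormalizable (M : Lam) : Prop :=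
  ∃ N, Relation.ReflTransGen Beta M N ∧ BetaNF N

/-- `M` is strongly β-normalizable: no infinite β-reduction sequence starts from `M`. -/
def StronglyNormalizable (M : Lam) : Prop := Acc (fun N M' => Beta M' N) M

end Lam

/-! Rigid resource terms (the nonzero ones), in de Bruijn notation:
`a ::= x | λx.a | ⟨c⟩d⃗` with `d⃗` a list of rigid terms.
The term `0` is represented by `none : Option Rig`. -/
inductive Rig : Type
  | var : ℕ → Rig
  | lam : Rig → Rig
  | app : Rig → List Rig → Rig

namespace Rig

mutual
/-- Number of free occurrences of the variable `k` in a rigid term. -/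
def countR (k : ℕ) : Rig → ℕ
  | var n => if n = k then 1 else 0
  | lam a => countR (k + 1) a
  | app c ds => countR k c + countRList k ds
termination_by a => sizeOf a

def countRList (k : ℕ) : List Rig → ℕ
  | [] => 0
  | d :: ds => countR k d + countRList k ds
termination_by ds => sizeOf ds
end

mutual
/-- Shift the free indices `≥ d` up by one. -/
def liftR (d : ℕ) : Rig → Rig
  | var n => if n < d then var n else var (n + 1)
  | lam a => lam (liftR (d + 1) a)
  | app c ds => app (liftR d c) (liftRList d ds)
termination_by a => sizeOf a

def liftRList (d : ℕ) : List Rig → List Rig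
  | [] => []
  | a :: as => liftR d a :: liftRList d as
termination_by as => sizeOf as
end

mutual
/-- Rigid substitution `a[b⃗/k]`: the list `b⃗` is distributed, in order, over the
free occurrences of the variable `k`; the result is `none` (i.e. `0`) when
`|b⃗| ≠ n_k(a)`. -/
def rsubst (k : ℕ) : Rig → List Rig → Option Rig
  | var n, bs =>
      if n = k then (match bs with | [b] => some b | _ => none)
      else (match bs with
            | [] => some (if k < n then var (n - 1) else var n)
            | _ => none)
  | lam a, bs => (rsubst (k + 1) a (liftRList 0 bs)).map lam
  | app c ds, bs =>
      match rsubst k c (bs.take (countR k c)), rsubstList k ds (bs.drop (countR k c)) with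
      | some c', some ds' => some (app c' ds')
      | _, _ => none
termination_by a _ => sizeOf a

def rsubstList (k : ℕ) : List Rig → List Rig → Option (List Rig)
  | [], bs => if bs.isEmpty then some [] else none
  | d :: ds, bs =>
      match rsubst k d (bs.take (countR k d)), rsubstList k ds (bs.drop (countR k d)) with
      | some d', some ds' => some (d' :: ds')
      | _, _ => none
termination_by ds _ => sizeOf ds
end

/-- One-step rigid resource reduction `→_r` (contextual closure of
`⟨λx.a⟩b⃗ →_r a[b⃗/x]`); the result may be `0` (i.e. `none`), which annihilates
the surrounding context. -/
inductive RStep : Rig → Option Rig → Prop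
  | beta (a : Rig) (bs : List Rig) : RStep (app (lam a) bs) (rsubst 0 a bs)
  | lam {a r} : RStep a r → RStep (lam a) (r.map lam)
  | head {c r} (ds : List Rig) : RStep c r → RStep (app c ds) (r.map (fun c' => app c' ds))
  | arg {d r} (c : Rig) (ds₁ ds₂ : List Rig) :
      RStep d r → RStep (app c (ds₁ ++ d :: ds₂)) (r.map (fun d' => app c (ds₁ ++ d' :: ds₂)))

/-- `→_r` on rigid terms extended with `0`; `0` is inert. -/
inductive RStepO : Option Rig → Option Rig → Prop
  | mk {a r} : RStep a r → RStepO (some a) r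

/-- `r` is a `→_r`-normal form (`0` is one). -/
def RNormal (r : Option Rig) : Prop := ¬∃ r', RStepO r r'

/-- The head of the application spine is a variable, with no λ on the spine. -/
def rNeutral : Rig → Bool
  | var _ => true
  | lam _ => false
  | app c _ => rNeutral c

/-- Rigid head-normal forms among nonzero terms: `λx₁…λxₘ.⟨…⟨x⟩d⃗₁…⟩d⃗ₙ`
(the term `0` is a head-normal form, but it is treated separately). -/
def rIsHNF : Rig → Prop
  | var _ => True
  | lam a => rIsHNF a
  | app c _ => rNeutral c = true

/-- The rigid head-reduction function `H_r`: contracts the head redex, identity on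
head-normal forms; the result may be `0` (i.e. `none`). -/
def Hr : Rig → Option Rig
  | var n => some (var n)
  | lam a => (Hr a).map lam
  | app (lam a) bs => rsubst 0 a bs
  | app (var n) ds => some (app (var n) ds)
  | app (app c₁ c₂) ds => (Hr (app c₁ c₂)).map (fun c' => app c' ds)

/-- `H_r` extended to terms-or-`0`. -/
def HrO : Option Rig → Option Rig := fun r => r.bind Hr

mutual
/-- The rigid left-parallel reduction function `L_r`: identity on `→_r`-normal forms,
applied componentwise to the argument lists on head-normal forms, contraction of the
head redex otherwise; the result may be `0` (i.e. `none`). -/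
def Lr : Rig → Option Rig
  | var n => some (var n)
  | lam a => (Lr a).map lam
  | app (lam a) bs => rsubst 0 a bs
  | app (var n) ds => (LrList ds).map (fun ds' => app (var n) ds')
  | app (app c₁ c₂) ds =>
      if rNeutral (app c₁ c₂) then
        match Lr (app c₁ c₂), LrList ds with
        | some c', some ds' => some (app c' ds')
        | _, _ => none
      else (Lr (app c₁ c₂)).map (fun c' => app c' ds)
termination_by a => sizeOf a

def LrList : List Rig → Option (List Rig)
  | [] => some []
  | d :: ds =>
      match Lr d, LrList ds with
      | some d', some ds' => some (d' :: ds')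
      | _, _ => none
termination_by ds => sizeOf ds
end

/-- `L_r` extended to terms-or-`0`. -/
def LrO : Option Rig → Option Rig := fun r => r.bind Lr

/-- Positive resource terms: no empty list/multiset occurs as the argument of an
application. -/
inductive rPositive : Rig → Prop
  | var (n : ℕ) : rPositive (var n)
  | lam {a} : rPositive a → rPositive (lam a)
  | app {c : Rig} {ds : List Rig} :
      rPositive c → ds ≠ [] → (∀ d ∈ ds, rPositive d) → rPositive (app c ds)

end Rig

/-- The rigid expansion `T_r(M)` of a λ-term (equivalently, the support of its Taylor
expansion, with multisets presented by lists: `Texp M` is closed under permutation of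
argument lists). -/
def Texp : Lam → Set Rig
  | Lam.var n => {Rig.var n}
  | Lam.lam M => {a | ∃ b ∈ Texp M, a = Rig.lam b}
  | Lam.app P Q => {a | ∃ c ∈ Texp P, ∃ ds : List Rig, (∀ d ∈ ds, d ∈ Texp Q) ∧ a = Rig.app c ds}

namespace Rig

/-- The support of the `n`-linear substitution `∂_k a · b̄`, where the multiset `b̄` is
presented by the list `bs`: the finite formal sum (multiset) of all nonzero results of
rigid substitutions along bijective assignments, i.e. permutations of `bs`. -/
def permSubst (k : ℕ) (a : Rig) (bs : List Rig) : Multiset Rig :=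
  ↑(bs.permutations.filterMap (fun bs' => rsubst k a bs'))

/-- One step of non-erasing ε-resource reduction `→^{¬e}_{∂ε}` out of a single resource
term, producing a finite formal sum (a multiset) of resource terms: non-erasing resource
β-steps `⟨λx.a⟩b̄ → ∂_x a · b̄` (with `x ∈ FV(a)`) and resource σ₁-steps, under any
context. -/
inductive NEStep : Rig → Multiset Rig → Prop
  | beta {a : Rig} (bs : List Rig) :
      0 < countR 0 a → NEStep (app (lam a) bs) (permSubst 0 a bs)
  | sigma (a : Rig) (ts qs : List Rig) :
      NEStep (app (app (lam a) ts) qs) {app (lam (app a (liftRList 0 qs))) ts}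
  | lam {a σ} : NEStep a σ → NEStep (lam a) (σ.map lam)
  | head {c σ} (ds : List Rig) : NEStep c σ → NEStep (app c ds) (σ.map (fun c' => app c' ds))
  | arg {d σ} (c : Rig) (ds₁ ds₂ : List Rig) :
      NEStep d σ → NEStep (app c (ds₁ ++ d :: ds₂)) (σ.map (fun d' => app c (ds₁ ++ d' :: ds₂)))

/-- Non-erasing ε-resource reduction on finite formal sums, extended by linearity. -/
def NEStepSum (σ τ : Multiset Rig) : Prop :=
  ∃ (a : Rig) (ρ υ : Multiset Rig), σ = a ::ₘ ρ ∧ NEStep a υ ∧ τ = υ + ρ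

/-- `σ` is a `→^{¬e}_{∂ε}`-normal form. -/
def NENormal (σ : Multiset Rig) : Prop := ¬∃ τ, NEStepSum σ τ

end Rig

/-- One step of non-erasing ε-reduction on λ-terms: non-erasing β-steps
`(λx.M)N → M[N/x]` (with `x ∈ FV(M)`) together with σ₁-steps
`((λx.M)N)P → (λx.MP)N` (`x ∉ FV(P)`), under any context. -/
inductive NEeps : Lam → Lam → Prop
  | beta {M : Lam} (N : Lam) :
      0 < Lam.count 0 M → NEeps (Lam.app (Lam.lam M) N) (Lam.subst M 0 N)
  | sigma (M N P : Lam) :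
      NEeps (Lam.app (Lam.app (Lam.lam M) N) P)
        (Lam.app (Lam.lam (Lam.app M (Lam.lift 0 P))) N)
  | lam {M M'} : NEeps M M' → NEeps (Lam.lam M) (Lam.lam M')
  | appL {P P' Q} : NEeps P P' → NEeps (Lam.app P Q) (Lam.app P' Q)
  | appR {P Q Q'} : NEeps Q Q' → NEeps (Lam.app P Q) (Lam.app P Q')

/-- The set `S` of λ-terms. -/
inductive SLam : Lam → Prop
  | varApp (n : ℕ) (Ms : List Lam) :
      (∀ M ∈ Ms, SLam M) → SLam (Lam.mkApps (Lam.var n) Ms)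
  | lam {M} : SLam M → SLam (Lam.lam M)
  | redex (M₀ M₁ : Lam) (Ms : List Lam) :
      SLam M₁ → SLam (Lam.mkApps (Lam.subst M₀ 0 M₁) Ms) →
      SLam (Lam.mkApps (Lam.app (Lam.lam M₀) M₁) Ms)

/-- λI-terms: every abstraction binds a variable occurring free in its body. -/
def LamI : Lam → Prop
  | Lam.var _ => True
  | Lam.lam M => LamI M ∧ 0 < Lam.count 0 M
  | Lam.app P Q => LamI P ∧ LamI Q

namespace RigAux
open Rig

theorem mem_liftRList {d : ℕ} {bs : List Rig} {S T : Set Rig}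
    (h : ∀ a ∈ S, liftR d a ∈ T) (hb : ∀ b ∈ bs, b ∈ S) : ∀ b ∈ liftRList d bs, b ∈ T := by
  induction bs with
  | nil => simp [liftRList]
  | cons b bs ih =>
    intro x hx
    rw [liftRList, List.mem_cons] at hx
    rcases hx with rfl | hx
    · exact h _ (hb _ (by simp))
    · exact ih (fun y hy => hb y (by simp [hy])) x hx

theorem lift_mem (M : Lam) : ∀ (d : ℕ), ∀ a ∈ Texp M, liftR d a ∈ Texp (Lam.lift d M) := by
  induction M with
  | var n =>
    intro d a ha
    have ha' : a = var n := ha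
    subst ha'
    rw [liftR, Lam.lift]
    split_ifs <;> rfl
  | lam M ih =>
    rintro d a ⟨b, hb, rfl⟩
    rw [liftR]
    exact ⟨_, ih _ _ hb, rfl⟩
  | app P Q ihP ihQ =>
    rintro d a ⟨c, hc, ds, hds, rfl⟩
    rw [liftR]
    exact ⟨_, ihP _ _ hc, _, mem_liftRList (ihQ d) hds, rfl⟩

theorem rsubstList_mem {k : ℕ} {S T : Set Rig} {U : Set Rig}
    (h : ∀ a ∈ S, ∀ bs : List Rig, (∀ b ∈ bs, b ∈ U) → ∀ c, rsubst k a bs = some c → c ∈ T)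
    (ds : List Rig) : ∀ (bs es : List Rig), (∀ d ∈ ds, d ∈ S) → (∀ b ∈ bs, b ∈ U) →
      rsubstList k ds bs = some es → ∀ e ∈ es, e ∈ T := by
  induction ds with
  | nil =>
    intro bs es _ _ he
    rw [rsubstList] at he
    split_ifs at he
    cases he
    simp
  | cons d ds ih =>
    intro bs es hds hbs he
    rw [rsubstList] at he
    split at he
    · rename_i d' ds' h1 h2
      cases he
      intro e hmem
      rcases List.mem_cons.1 hmem with rfl | hmem
      · exact h _ (hds _ (by simp)) _ (fun b hb => hbs b (List.mem_of_mem_take hb)) _ h1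
      · exact ih _ _ (fun y hy => hds y (by simp [hy]))
          (fun b hb => hbs b (List.mem_of_mem_drop hb)) h2 e hmem
    · cases he

theorem subst_mem (M : Lam) : ∀ (k : ℕ) (N : Lam), ∀ a ∈ Texp M, ∀ bs : List Rig,
    (∀ b ∈ bs, b ∈ Texp N) → ∀ c, rsubst k a bs = some c → c ∈ Texp (Lam.subst M k N) := by
  induction M with
  | var n =>
    intro k N a ha bs hbs c hc
    have ha' : a = var n := ha
    subst ha'
    rw [Lam.subst]
    by_cases hn : n = k
    · rw [if_pos hn]
      rcases bs with _ | ⟨b, _ | ⟨b', bs⟩⟩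
      · simp [rsubst, hn] at hc
      · simp only [rsubst, hn, if_true, Option.some.injEq] at hc
        subst hc
        exact hbs _ (by simp)
      · simp [rsubst, hn] at hc
    · rw [if_neg hn]
      rcases bs with _ | ⟨b, _ | ⟨b', bs⟩⟩
      · simp only [rsubst, hn, if_false, Option.some.injEq] at hc
        subst hc
        split_ifs <;> rfl
      · simp [rsubst, hn] at hc
      · simp [rsubst, hn] at hc
  | lam M ih =>
    rintro k N a ⟨b, hb, rfl⟩ bs hbs c hc
    rw [rsubst, Option.map_eq_some_iff] at hc
    obtain ⟨c', hc', rfl⟩ := hc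
    exact ⟨c', ih _ _ _ hb _ (mem_liftRList (lift_mem N 0) hbs) _ hc', rfl⟩
  | app P Q ihP ihQ =>
    rintro k N a ⟨c, hc, ds, hds, rfl⟩ bs hbs e he
    rw [rsubst] at he
    split at he
    · rename_i c' ds' h1 h2
      cases he
      exact ⟨c', ihP _ _ _ hc _ (fun b hb => hbs b (List.mem_of_mem_take hb)) _ h1, ds',
        rsubstList_mem (ihQ k N) _ _ _ hds (fun b hb => hbs b (List.mem_of_mem_drop hb)) h2, rfl⟩
    · cases he

theorem neutral_eq (M : Lam) : ∀ a ∈ Texp M, rNeutral a = Lam.neutral M := by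
  induction M with
  | var n =>
    intro a ha
    have ha' : a = var n := ha
    subst ha'
    rfl
  | lam M ih =>
    rintro a ⟨b, hb, rfl⟩
    rfl
  | app P Q ihP ihQ =>
    rintro a ⟨c, hc, ds, hds, rfl⟩
    rw [rNeutral, Lam.neutral]
    exact ihP _ hc

theorem LrList_mem {S T : Set Rig} (h : ∀ a ∈ S, ∀ b, Lr a = some b → b ∈ T)
    (ds : List Rig) : ∀ es : List Rig, (∀ d ∈ ds, d ∈ S) → LrList ds = some es →
      ∀ e ∈ es, e ∈ T := by
  induction ds with
  | nil =>
    intro es _ he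
    rw [LrList] at he
    cases he
    simp
  | cons d ds ih =>
    intro es hds he
    rw [LrList] at he
    split at he
    · rename_i d' ds' h1 h2
      cases he
      intro e hmem
      rcases List.mem_cons.1 hmem with rfl | hmem
      · exact h _ (hds _ (by simp)) _ h1
      · exact ih _ (fun y hy => hds y (by simp [hy])) h2 e hmem
    · cases he

theorem Lr_mem (M : Lam) : ∀ a ∈ Texp M, ∀ b, Lr a = some b → b ∈ Texp (Lam.L M) := by
  induction M with
  | var n =>
    intro a ha b hb
    have ha' : a = var n := ha
    subst ha'
    rw [Lr] at hb
    cases hb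
    rfl
  | lam M ih =>
    rintro a ⟨b, hb, rfl⟩ c hc
    rw [Lr, Option.map_eq_some_iff] at hc
    obtain ⟨c', hc', rfl⟩ := hc
    exact ⟨c', ih _ hb _ hc', rfl⟩
  | app P Q ihP ihQ =>
    rintro a ⟨c, hc, ds, hds, rfl⟩ e he
    cases P with
    | var n =>
      have hc' : c = var n := hc
      subst hc'
      rw [Lr, Option.map_eq_some_iff] at he
      obtain ⟨ds', h2, rfl⟩ := he
      exact ⟨_, rfl, ds', LrList_mem ihQ _ _ hds h2, rfl⟩
    | lam P =>
      obtain ⟨c', hc', rfl⟩ := hc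
      rw [Lr] at he
      exact subst_mem P 0 Q _ hc' _ hds _ he
    | app P₁ P₂ =>
      have hn := neutral_eq _ _ hc
      have ihP' := ihP _ hc
      obtain ⟨c', hc', ds', hds', rfl⟩ := hc
      rw [Lr, hn] at he
      rw [Lam.L]
      split_ifs at he ⊢ with hneu
      · split at he
        · rename_i u v h1 h2
          cases he
          exact ⟨_, ihP' _ h1, _, LrList_mem ihQ _ _ hds h2, rfl⟩
        · cases he
      · rw [Option.map_eq_some_iff] at he
        obtain ⟨u, h1, rfl⟩ := he
        exact ⟨_, ihP' _ h1, _, hds, rfl⟩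

theorem nf_of_pos {M N : Lam} (h : Lam.Beta M N) :
    ∀ a ∈ Texp M, rPositive a → ∃ r, RStep a r := by
  induction h with
  | beta M N =>
    rintro a ⟨c, ⟨c', hc', rfl⟩, ds, hds, rfl⟩ _
    exact ⟨_, RStep.beta _ _⟩
  | lam _ ih =>
    rintro a ⟨b, hb, rfl⟩ (_ | hp | _)
    rename_i hp
    obtain ⟨r, hr⟩ := ih _ hb hp
    exact ⟨_, RStep.lam hr⟩
  | appL _ ih =>
    rintro a ⟨c, hc, ds, hds, rfl⟩ hp
    cases hp with
    | app hp _ _ =>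
      obtain ⟨r, hr⟩ := ih _ hc hp
      exact ⟨_, RStep.head _ hr⟩
  | appR _ ih =>
    rintro a ⟨c, hc, ds, hds, rfl⟩ hp
    cases hp with
    | app _ hne hp =>
      cases ds with
      | nil => exact absurd rfl hne
      | cons d ds =>
        obtain ⟨r, hr⟩ := ih d (hds _ (by simp)) (hp _ (by simp))
        exact ⟨_, RStep.arg c [] ds hr⟩

theorem iter_none (n : ℕ) : LrO^[n] none = none := by
  induction n with
  | zero => rfl
  | succ n ih => rw [Function.iterate_succ_apply]; exact ih

theorem iter_mem (n : ℕ) : ∀ (M : Lam) (a b : Rig), a ∈ Texp M → LrO^[n] (some a) = some b →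
    b ∈ Texp (Lam.L^[n] M) := by
  induction n with
  | zero =>
    intro M a b ha h
    cases h
    exact ha
  | succ n ih =>
    intro M a b ha h
    rw [Function.iterate_succ_apply] at h ⊢
    have h' : LrO^[n] (Lr a) = some b := h
    cases hl : Lr a with
    | none => rw [hl, iter_none] at h'; cases h'
    | some c =>
      rw [hl] at h'
      exact ih _ _ _ (Lr_mem M a ha c hl) h'

end RigAux

/-- if there are `a ∈ T_r(M)` and `n` such that `L_r^n(a)` is a positive
`→_r`-normal form, then `L^n(M)` is a β-normal form. -/
theorem betaNF_of_Lr_positive {M : Lam} {a : Rig} {n : ℕ} (ha : a ∈ Texp M)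
    (h : ∃ b : Rig, Rig.LrO^[n] (some a) = some b ∧ Rig.rPositive b ∧ ¬∃ r, Rig.RStep b r) :
    Lam.BetaNF (Lam.L^[n] M) := by
  rintro ⟨N, hN⟩
  obtain ⟨b, hb, hpos, hnf⟩ := h
  exact hnf (RigAux.nf_of_pos hN b (RigAux.iter_mem n M a b ha hb) hpos)
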